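/- Let P be as in the context, let f ∈ C_0^∞(ℝ²), and let F be a special almost holomorphic extension of f. Then the diagonal function z ↦ F(z,z) is an almost holomorphic extension of x ↦ f(x,x), and (1/π²)∫_ℂ∫_ℂ (∂²F/∂z̄₁∂z̄₂)(z₁,z₂)·(z₁·1 − P)⁻¹(z₂·1 − P)⁻¹ L(dz₁) L(dz₂) = −(1/π)∫_ℂ (∂/∂z̄)[F(z,z)]·(z·1 − P)⁻¹ L(dz). -/

import Mathlib

open MeasureTheory Complex Real

noncomputable section

/-- The Cauchy–Riemann operator `∂F/∂z̄ = (∂F/∂x + i ∂F/∂y)/2` (one variable). -/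
def dbar (F : ℂ → ℂ) (z : ℂ) : ℂ :=
  (fderiv ℝ F z 1 + Complex.I * fderiv ℝ F z Complex.I) / 2

/-- `∂F/∂z̄₁` for `F : ℂ² → ℂ`. -/
def dbar1 (F : ℂ × ℂ → ℂ) (z : ℂ × ℂ) : ℂ :=
  (fderiv ℝ F z (1, 0) + Complex.I * fderiv ℝ F z (Complex.I, 0)) / 2

/-- `∂F/∂z̄₂` for `F : ℂ² → ℂ`. -/
def dbar2 (F : ℂ × ℂ → ℂ) (z : ℂ × ℂ) : ℂ :=
  (fderiv ℝ F z (0, 1) + Complex.I * fderiv ℝ F z (0, Complex.I)) / 2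

/-- `∂²F/∂z̄₁∂z̄₂` for `F : ℂ² → ℂ`. -/
def dbar12 (F : ℂ × ℂ → ℂ) (z : ℂ × ℂ) : ℂ := dbar1 (fun w => dbar2 F w) z

/-- `F` is an almost holomorphic extension of `f ∈ C_0^∞(ℝ)`. -/
def IsAHExt (f : ℝ → ℂ) (F : ℂ → ℂ) : Prop :=
  ContDiff ℝ (⊤ : ℕ∞) F ∧ HasCompactSupport F ∧ (∀ x : ℝ, F x = f x) ∧
    ∀ N : ℕ, ∃ C : ℝ, ∀ z : ℂ, ‖dbar F z‖ ≤ C * |z.im| ^ N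

/-- `F` is a special almost holomorphic extension of `f ∈ C_0^∞(ℝ²)`. -/
def IsSpecialAHExt2 (f : ℝ × ℝ → ℂ) (F : ℂ × ℂ → ℂ) : Prop :=
  ContDiff ℝ (⊤ : ℕ∞) F ∧ HasCompactSupport F ∧
    (∀ x y : ℝ, F (x, y) = f (x, y)) ∧
    ∀ N : ℕ, ∃ C : ℝ, ∀ z : ℂ × ℂ,
      ‖dbar1 F z‖ ≤ C * |z.1.im| ^ N ∧
      ‖dbar2 F z‖ ≤ C * |z.2.im| ^ N ∧
      ‖dbar12 F z‖ ≤ C * (|z.1.im| * |z.2.im|) ^ N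

/-- The resolvent `(z·1 − P)⁻¹` (equal to `0` when `z·1 − P` is not invertible). -/
def res {B : Type*} [NormedAddCommGroup B] [NormedSpace ℂ B] (P : B →L[ℂ] B) (z : ℂ) :
    B →L[ℂ] B := Ring.inverse (z • (1 : B →L[ℂ] B) - P)

/-- The spectrum of `P` is real. -/
def RealSpectrum {B : Type*} [NormedAddCommGroup B] [NormedSpace ℂ B]
    (P : B →L[ℂ] B) : Prop := ∀ z ∈ spectrum ℂ P, z.im = 0

/-- The resolvent of `P` has locally temperate growth near `ℝ`. -/
def TemperateResolventLoc {B : Type*} [NormedAddCommGroup B] [NormedSpace ℂ B]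
    (P : B →L[ℂ] B) : Prop :=
  ∀ R > (0:ℝ), ∃ C N : ℝ, 0 ≤ C ∧ 0 ≤ N ∧ ∀ z : ℂ, z.im ≠ 0 → ‖z‖ ≤ R →
    ‖res P z‖ ≤ C * |z.im| ^ (-N)

/-!
Off the real line the resolvent identity turns the product of resolvents in the double integral into
`(z₂ - z₁)⁻¹ • (ρ z₁ - ρ z₂)`, a difference of two terms each involving one resolvent only. Since
`∂̄₁∂̄₂F` vanishes to infinite order at `Im z₁ = 0` and at `Im z₂ = 0`, it absorbs the growth of the
resolvent, and both terms are integrable against the locally integrable Cauchy kernel. By the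
Cauchy–Pompeiu formula, integrating out the variable that the resolvent does not see leaves
`-π ∂̄₁F(z, z)` and `-π ∂̄₂F(z, z)`; by the chain rule these add up to `-π` times `∂̄` of `F(z, z)`.

In polar coordinates `r • w⁻¹ • ∂̄g(w)` is half the sum of the radial derivative of `g` and a
multiple of its angular derivative, which integrates to zero over circles;
this gives Cauchy–Pompeiu.
-/

open scoped ComplexConjugate Topology

section DbarAlong

variable {V W E : Type*} [NormedAddCommGroup V] [NormedSpace ℂ V] [NormedAddCommGroup W]
  [NormedSpace ℂ W] [NormedAddCommGroup E] [NormedSpace ℂ E]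

/-- The Cauchy–Riemann operator of a vector-valued function along the complex line spanned by `v`,
so that `∂/∂z̄`, `∂/∂z̄₁` and `∂/∂z̄₂` are the cases `v = 1`, `v = (1, 0)` and `v = (0, 1)`. -/
def dbarAlong (v : V) (F : V → E) (z : V) : E :=
  (2⁻¹ : ℂ) • (fderiv ℝ F z v + I • fderiv ℝ F z (I • v))

lemma dbar_eq_dbarAlong (F : ℂ → ℂ) : dbar F = dbarAlong 1 F := by
  ext z
  simp [dbar, dbarAlong, div_eq_inv_mul]

lemma dbar1_eq_dbarAlong (F : ℂ × ℂ → ℂ) : dbar1 F = dbarAlong (1, 0) F := by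
  ext z
  simp [dbar1, dbarAlong, div_eq_inv_mul]

lemma dbar2_eq_dbarAlong (F : ℂ × ℂ → ℂ) : dbar2 F = dbarAlong (0, 1) F := by
  ext z
  simp [dbar2, dbarAlong, div_eq_inv_mul]

lemma dbar12_eq_dbarAlong (F : ℂ × ℂ → ℂ) :
    dbar12 F = dbarAlong (1, 0) (dbarAlong (0, 1) F) := by
  rw [← dbar1_eq_dbarAlong, ← dbar2_eq_dbarAlong]
  rfl

lemma dbarAlong_add (v w : V) (F : V → E) (z : V) :
    dbarAlong (v + w) F z = dbarAlong v F z + dbarAlong w F z := by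
  simp only [dbarAlong, smul_add, map_add]
  abel

lemma dbarAlong_smul (c : ℂ) (v : V) (F : V → E) (z : V) :
    dbarAlong (c • v) F z = conj c • dbarAlong v F z := by
  have hc : c • v = c.re • v + c.im • I • v := by
    rw [← Complex.coe_smul, ← Complex.coe_smul, smul_smul, ← add_smul, re_add_im]
  have hIc : I • c • v = c.re • I • v - c.im • v := by
    rw [hc, smul_add, smul_comm I c.re, smul_comm I c.im, smul_smul I I, I_mul_I]
    module
  have hconj : conj c = c.re - c.im * I := by simp [Complex.ext_iff]
  rw [dbarAlong, dbarAlong, hIc, hc, hconj]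
  simp only [map_add, map_sub, map_smul]
  simp only [← Complex.coe_smul]
  match_scalars
  · ring
  · linear_combination (2⁻¹ * c.im : ℂ) * I_mul_I

lemma dbarAlong_comp {f : V → W} {f' : V →L[ℂ] W} {F : W → E} {z : V}
    (hF : DifferentiableAt ℝ F (f z)) (hf : HasFDerivAt f f' z) (v : V) :
    dbarAlong v (F ∘ f) z = dbarAlong (f' v) F (f z) := by
  have h : fderiv ℝ (F ∘ f) z = fderiv ℝ F (f z) ∘L f'.restrictScalars ℝ :=
    (hF.hasFDerivAt.comp z (hf.restrictScalars ℝ)).fderiv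
  simp [dbarAlong, h]

lemma dbarAlong_comp_swap {F : V × W → E} (hF : Differentiable ℝ F) (v : W × V) :
    dbarAlong v (F ∘ Prod.swap) = dbarAlong v.swap F ∘ Prod.swap := by
  ext z
  exact dbarAlong_comp (hF _) (ContinuousLinearEquiv.prodComm ℂ W V).hasFDerivAt v

lemma contDiff_dbarAlong {F : V → E} {m n : WithTop ℕ∞} (hF : ContDiff ℝ n F) (hmn : m + 1 ≤ n)
    (v : V) : ContDiff ℝ m (dbarAlong v F) := by
  have hF' (w : V) : ContDiff ℝ m (fun z ↦ fderiv ℝ F z w) :=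
    (hF.fderiv_right hmn).clm_apply contDiff_const
  exact ((hF' v).add ((hF' _).const_smul I)).const_smul _

lemma hasCompactSupport_dbarAlong {F : V → E} (hF : HasCompactSupport F) (v : V) :
    HasCompactSupport (dbarAlong v F) :=
  (hF.fderiv ℝ).comp_left (g := fun L : V →L[ℝ] E ↦ (2⁻¹ : ℂ) • (L v + I • L (I • v))) (by simp)

lemma fderiv_dbarAlong {F : V → E} (hF : ContDiff ℝ 2 F) (v w z : V) :
    fderiv ℝ (dbarAlong v F) z w = (2⁻¹ : ℂ) •
      (fderiv ℝ (fderiv ℝ F) z w v + I • fderiv ℝ (fderiv ℝ F) z w (I • v)) := by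
  have hF' : DifferentiableAt ℝ (fderiv ℝ F) z :=
    (hF.fderiv_right (m := 1) le_rfl).differentiable one_ne_zero z
  have happ (u : V) :
      HasFDerivAt (fun y ↦ fderiv ℝ F y u) ((fderiv ℝ (fderiv ℝ F) z).flip u) z := by
    simpa using hF'.hasFDerivAt.clm_apply (hasFDerivAt_const u z)
  have h := ((happ v).add ((happ (I • v)).const_smul I)).const_smul (2⁻¹ : ℂ)
  exact DFunLike.congr_fun h.fderiv w

lemma dbarAlong_comm {F : V → E} (hF : ContDiff ℝ 2 F) (v w : V) :
    dbarAlong v (dbarAlong w F) = dbarAlong w (dbarAlong v F) := by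
  ext z
  have hsymm : IsSymmSndFDerivAt ℝ F z := hF.contDiffAt.isSymmSndFDerivAt (by simp)
  have hsymm' (a b : V) : fderiv ℝ (fderiv ℝ F) z a b = fderiv ℝ (fderiv ℝ F) z b a := hsymm.eq a b
  rw [dbarAlong, dbarAlong, fderiv_dbarAlong hF, fderiv_dbarAlong hF, fderiv_dbarAlong hF,
    fderiv_dbarAlong hF, hsymm' v w, hsymm' v (I • w), hsymm' (I • v) w, hsymm' (I • v) (I • w)]
  module

end DbarAlong

section CauchyPompeiu

variable {E : Type*} [NormedAddCommGroup E]

lemma integrableOn_Ioi_prod_Ioo_of_continuous {A : ℝ × ℝ → E} (hA : Continuous A) {R : ℝ}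
    (hR : ∀ p : ℝ × ℝ, R < p.1 → A p = 0) (s a b : ℝ) :
    IntegrableOn A (Set.Ioi s ×ˢ Set.Ioo a b) := by
  have hcompact : IntegrableOn A (Set.Icc s R ×ˢ Set.Icc a b) :=
    hA.continuousOn.integrableOn_compact (isCompact_Icc.prod isCompact_Icc)
  refine hcompact.of_forall_sdiff_eq_zero (measurableSet_Ioi.prod measurableSet_Ioo) ?_
  rintro ⟨r, t⟩ ⟨⟨hr, ht⟩, hnot⟩
  exact hR _ (not_le.mp fun hrR ↦ hnot ⟨⟨le_of_lt hr, hrR⟩, Set.Ioo_subset_Icc_self ht⟩)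

lemma integral_Ioi_fderiv_ray {V : Type*} [NormedAddCommGroup V] [NormedSpace ℝ V]
    [NormedSpace ℝ E] [CompleteSpace E] {g : V → E} (hg : ContDiff ℝ 1 g)
    (hsupp : HasCompactSupport g) {v : V} (hv : v ≠ 0) :
    ∫ r in Set.Ioi (0 : ℝ), fderiv ℝ g (r • v) v = -g 0 := by
  have hderiv (r : ℝ) : deriv (fun r : ℝ ↦ g (r • v)) r = fderiv ℝ g (r • v) v := by
    have hray : HasDerivAt (fun r : ℝ ↦ r • v) v r := by
      simpa using (hasDerivAt_id r).smul_const v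
    exact ((hg.differentiable one_ne_zero _).hasFDerivAt.comp_hasDerivAt r hray).deriv
  have h := HasCompactSupport.integral_Ioi_deriv_eq (f := fun r : ℝ ↦ g (r • v))
    (hg.comp (contDiff_id.smul contDiff_const))
    (hsupp.comp_isClosedEmbedding (isClosedEmbedding_smul_left hv)) 0
  simpa only [hderiv, zero_smul] using h

lemma integral_Ioo_fderiv_circleMap [NormedSpace ℝ E] [CompleteSpace E] {g : ℂ → E}
    (hg : ContDiff ℝ 1 g) (c : ℂ) (r : ℝ) :
    ∫ t in Set.Ioo (-π) π, fderiv ℝ g (circleMap c r t) (circleMap 0 r t * I) = 0 := by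
  have hderiv (t : ℝ) : HasDerivAt (fun t ↦ g (circleMap c r t))
      (fderiv ℝ g (circleMap c r t) (circleMap 0 r t * I)) t :=
    (hg.differentiable one_ne_zero _).hasFDerivAt.comp_hasDerivAt t (hasDerivAt_circleMap c r t)
  have hcont : Continuous fun t ↦ fderiv ℝ g (circleMap c r t) (circleMap 0 r t * I) :=
    ((hg.continuous_fderiv one_ne_zero).comp (continuous_circleMap c r)).clm_apply
      ((continuous_circleMap 0 r).mul continuous_const)
  have hperiod : circleMap c r π = circleMap c r (-π) := by
    rw [← periodic_circleMap c r (-π)]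
    ring_nf
  rw [← integral_Ioc_eq_integral_Ioo, ← intervalIntegral.integral_of_le (by linarith [pi_pos]),
    intervalIntegral.integral_eq_sub_of_hasDerivAt (fun t _ ↦ hderiv t)
      (hcont.intervalIntegrable _ _), hperiod, sub_self]

lemma integrableOn_fderiv_polar [NormedSpace ℝ E] {g : ℂ → E} (hg : ContDiff ℝ 1 g)
    (hsupp : HasCompactSupport g) (c : ℂ) :
    IntegrableOn (fun p : ℝ × ℝ ↦ fderiv ℝ g (p.1 • circleMap 0 1 p.2) (circleMap 0 1 p.2 * c))
      polarCoord.target := by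
  obtain ⟨R, hR⟩ := (hsupp.fderiv ℝ).isCompact.isBounded.subset_closedBall 0
  have hcircle : Continuous fun p : ℝ × ℝ ↦ circleMap 0 1 p.2 :=
    (continuous_circleMap 0 1).comp continuous_snd
  refine integrableOn_Ioi_prod_Ioo_of_continuous (R := R) ?_ (fun p hp ↦ ?_) _ _ _
  · exact ((hg.continuous_fderiv one_ne_zero).comp (continuous_fst.smul hcircle)).clm_apply
      (hcircle.mul continuous_const)
  · have hnotMem : p.1 • circleMap 0 1 p.2 ∉ tsupport (fderiv ℝ g) := fun hmem ↦ by
      have hnorm := hR hmem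
      rw [mem_closedBall_zero_iff, norm_smul, norm_circleMap_zero, abs_one, mul_one] at hnorm
      exact absurd ((le_abs_self _).trans hnorm) (not_le.mpr hp)
    rw [image_eq_zero_of_notMem_tsupport hnotMem, zero_apply]

lemma setIntegral_polar_fderiv_radial [NormedSpace ℝ E] [CompleteSpace E] {g : ℂ → E}
    (hg : ContDiff ℝ 1 g) (hsupp : HasCompactSupport g) :
    ∫ p in polarCoord.target, fderiv ℝ g (p.1 • circleMap 0 1 p.2) (circleMap 0 1 p.2) =
      -(2 * π) • g 0 := by
  have hint := integrableOn_fderiv_polar hg hsupp 1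
  simp only [mul_one] at hint
  rw [polarCoord_target, Measure.volume_eq_prod] at hint ⊢
  rw [IntegrableOn, ← Measure.prod_restrict] at hint
  rw [← Measure.prod_restrict, integral_prod_symm _ hint]
  have hray (t : ℝ) : ∫ r in Set.Ioi (0 : ℝ),
      fderiv ℝ g (r • circleMap 0 1 t) (circleMap 0 1 t) = -g 0 :=
    integral_Ioi_fderiv_ray hg hsupp (circleMap_ne_center one_ne_zero)
  simp only [hray, setIntegral_const, Real.volume_real_Ioo_of_le (neg_le_self pi_pos.le)]
  module

lemma setIntegral_polar_fderiv_angular [NormedSpace ℝ E] [CompleteSpace E] {g : ℂ → E}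
    (hg : ContDiff ℝ 1 g) (hsupp : HasCompactSupport g) :
    ∫ p in polarCoord.target, fderiv ℝ g (p.1 • circleMap 0 1 p.2) (circleMap 0 1 p.2 * I) = 0 := by
  have hint := integrableOn_fderiv_polar hg hsupp I
  rw [polarCoord_target, Measure.volume_eq_prod] at hint ⊢
  rw [IntegrableOn, ← Measure.prod_restrict] at hint
  rw [← Measure.prod_restrict, integral_prod _ hint]
  refine setIntegral_eq_zero_of_forall_eq_zero fun r hr ↦ ?_
  have hscale (t : ℝ) : circleMap 0 r t = r • circleMap 0 1 t := by simp [circleMap]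
  have hcircle := integral_Ioo_fderiv_circleMap hg 0 r
  simp only [hscale, smul_mul_assoc, map_smul, integral_smul] at hcircle
  exact (smul_eq_zero.mp hcircle).resolve_left (ne_of_gt hr)

variable [NormedSpace ℂ E]

lemma smul_inv_smul_dbarAlong_polar (g : ℂ → E) {r : ℝ} (hr : r ≠ 0) (t : ℝ) :
    r • ((r • circleMap 0 1 t)⁻¹ • dbarAlong 1 g (r • circleMap 0 1 t)) =
      (2⁻¹ : ℂ) • (fderiv ℝ g (r • circleMap 0 1 t) (circleMap 0 1 t) +
        I • fderiv ℝ g (r • circleMap 0 1 t) (circleMap 0 1 t * I)) := by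
  have hconj : conj (circleMap 0 1 t) = (circleMap 0 1 t)⁻¹ := by
    rw [conj_circleMap_zero, circleMap_zero_inv, inv_one]
  calc r • ((r • circleMap 0 1 t)⁻¹ • dbarAlong 1 g (r • circleMap 0 1 t))
      = conj (circleMap 0 1 t) • dbarAlong 1 g (r • circleMap 0 1 t) := by
        rw [hconj, smul_inv₀, smul_assoc, smul_inv_smul₀ hr]
    _ = dbarAlong (circleMap 0 1 t) g (r • circleMap 0 1 t) := by
        rw [← dbarAlong_smul, smul_eq_mul, mul_one]
    _ = _ := by rw [dbarAlong, smul_eq_mul, mul_comm I]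

lemma integral_inv_smul_dbarAlong [CompleteSpace E] {g : ℂ → E} (hg : ContDiff ℝ 1 g)
    (hsupp : HasCompactSupport g) :
    ∫ w : ℂ, w⁻¹ • dbarAlong 1 g w = -(π : ℂ) • g 0 := by
  have hradial := integrableOn_fderiv_polar hg hsupp 1
  have hangular := integrableOn_fderiv_polar hg hsupp I
  simp only [mul_one] at hradial
  have hpolar : ∀ p ∈ polarCoord.target,
      p.1 • ((Complex.polarCoord.symm p)⁻¹ • dbarAlong 1 g (Complex.polarCoord.symm p)) =
        (2⁻¹ : ℂ) • (fderiv ℝ g (p.1 • circleMap 0 1 p.2) (circleMap 0 1 p.2) +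
          I • fderiv ℝ g (p.1 • circleMap 0 1 p.2) (circleMap 0 1 p.2 * I)) := fun p hp ↦ by
    have hsymm : Complex.polarCoord.symm p = p.1 • circleMap 0 1 p.2 := by
      simp [Complex.polarCoord_symm_apply, circleMap, exp_mul_I, mul_add]
    rw [hsymm, smul_inv_smul_dbarAlong_polar g (ne_of_gt hp.1)]
  rw [← Complex.integral_comp_polarCoord_symm,
    setIntegral_congr_fun polarCoord.open_target.measurableSet hpolar, integral_smul,
    integral_add hradial (hangular.fun_smul I), integral_smul,
    setIntegral_polar_fderiv_radial hg hsupp, setIntegral_polar_fderiv_angular hg hsupp,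
    ← Complex.coe_smul]
  push_cast
  module

theorem cauchy_pompeiu [CompleteSpace E] {g : ℂ → E} (hg : ContDiff ℝ 1 g)
    (hsupp : HasCompactSupport g) (a : ℂ) :
    ∫ w : ℂ, (w - a)⁻¹ • dbarAlong 1 g w = -(π : ℂ) • g a := by
  have htranslate (w : ℂ) : dbarAlong 1 (g ∘ (· + a)) w = dbarAlong 1 g (w + a) :=
    dbarAlong_comp (hg.differentiable one_ne_zero _) ((hasFDerivAt_id w).add_const a) 1
  have h := integral_inv_smul_dbarAlong (g := g ∘ (· + a)) (hg.comp (by fun_prop))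
    (hsupp.comp_homeomorph (Homeomorph.addRight a))
  simp only [htranslate, Function.comp_apply, zero_add] at h
  rw [← h, ← integral_add_right_eq_self (μ := volume) _ a]
  simp only [add_sub_cancel_right]

end CauchyPompeiu

section CauchyKernel

lemma integrableOn_inv_ball (R : ℝ) : IntegrableOn (fun w : ℂ ↦ w⁻¹) (Metric.ball 0 R) := by
  refine integrableOn_ball_of_norm_le_rpow (α := 1) (C := 1) (by simp) (by simp)
    (.of_forall fun w ↦ ?_) (by fun_prop)
  simp [Real.rpow_neg_one]

lemma integrableOn_inv_snd_sub_fst {K : Set (ℂ × ℂ)} (hK : IsCompact K) :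
    IntegrableOn (fun z : ℂ × ℂ ↦ (z.2 - z.1)⁻¹) K := by
  obtain ⟨R, hR⟩ := hK.isBounded.subset_ball 0
  have hprod : IntegrableOn (fun p : ℂ × ℂ ↦ p.2⁻¹)
      (Metric.ball 0 R ×ˢ Metric.ball 0 (R + R)) := by
    rw [IntegrableOn, Measure.volume_eq_prod, ← Measure.prod_restrict]
    have : IsFiniteMeasure (volume.restrict (Metric.ball (0 : ℂ) R)) :=
      isFiniteMeasure_restrict.mpr measure_ball_lt_top.ne
    exact (integrableOn_inv_ball (R + R)).comp_snd _
  have hshear := (measurePreserving_prod_sub (volume : Measure ℂ) volume).restrict_preimage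
    ((Metric.isOpen_ball (x := 0) (ε := R)).measurableSet.prod
      (Metric.isOpen_ball (x := 0) (ε := R + R)).measurableSet)
  refine (hshear.integrable_comp_of_integrable hprod).mono_measure
    (Measure.restrict_mono_set _ fun z hz ↦ ?_)
  have hz' := mem_ball_zero_iff.mp (hR hz)
  have hz₁ := (norm_fst_le z).trans_lt hz'
  have hz₂ := (norm_snd_le z).trans_lt hz'
  exact ⟨mem_ball_zero_iff.mpr hz₁,
    mem_ball_zero_iff.mpr ((norm_sub_le _ _).trans_lt (add_lt_add hz₂ hz₁))⟩

variable {E : Type*} [NormedAddCommGroup E] [NormedSpace ℂ E]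

lemma integrable_inv_sub_smul {H : ℂ × ℂ → E} (hmeas : AEStronglyMeasurable H volume)
    (hsupp : HasCompactSupport H) {M : ℝ} (hM : ∀ z, ‖H z‖ ≤ M) :
    Integrable (fun z : ℂ × ℂ ↦ (z.2 - z.1)⁻¹ • H z) := by
  have hon : IntegrableOn (fun z : ℂ × ℂ ↦ (z.2 - z.1)⁻¹ • H z) (tsupport H) :=
    (integrableOn_inv_snd_sub_fst hsupp.isCompact).smul_bdd M hmeas.restrict (.of_forall hM)
  refine (integrableOn_iff_integrable_of_support_subset fun z hz ↦ ?_).mp hon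
  exact subset_tsupport H fun h0 ↦ hz (by simp [h0])

lemma integral_inv_sub_smul_dbarAlong_slice [CompleteSpace E] {G : ℂ × ℂ → E}
    (hG : ContDiff ℝ 1 G) (hsupp : HasCompactSupport G) (a : ℂ) :
    ∫ w : ℂ, (w - a)⁻¹ • dbarAlong (0, 1) G (a, w) = -(π : ℂ) • G (a, a) := by
  have hslice (w : ℂ) : dbarAlong 1 (G ∘ Prod.mk a) w = dbarAlong (0, 1) G (a, w) :=
    dbarAlong_comp (hG.differentiable one_ne_zero _) (hasFDerivAt_prodMk_right a w) 1
  have hemb : Topology.IsClosedEmbedding (Prod.mk a : ℂ → ℂ × ℂ) :=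
    Function.LeftInverse.isClosedEmbedding (f := Prod.snd) (fun _ ↦ rfl) continuous_snd
      (by fun_prop)
  simpa only [hslice, Function.comp_apply] using
    cauchy_pompeiu (hG.comp (contDiff_prodMk_right a)) (hsupp.comp_isClosedEmbedding hemb) a

variable {G : ℂ × ℂ → ℂ} {ρ : ℂ → E}

lemma integral_inv_sub_smul_dbarAlong_smul_slice [CompleteSpace E] (hG : ContDiff ℝ 1 G)
    (hsupp : HasCompactSupport G) (a : ℂ) (x : E) :
    ∫ w : ℂ, (w - a)⁻¹ • dbarAlong (0, 1) G (a, w) • x = -(π : ℂ) • G (a, a) • x := by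
  simp only [← smul_assoc]
  rw [integral_smul_const, integral_inv_sub_smul_dbarAlong_slice hG hsupp]

lemma integrable_diag_smul_of_integrable_dbarAlong [CompleteSpace E] (hG : ContDiff ℝ 1 G)
    (hsupp : HasCompactSupport G)
    (hint : Integrable fun z : ℂ × ℂ ↦ (z.2 - z.1)⁻¹ • dbarAlong (0, 1) G z • ρ z.1) :
    Integrable fun z ↦ G (z, z) • ρ z := by
  rw [Measure.volume_eq_prod] at hint
  have h := hint.integral_prod_left
  simp only [integral_inv_sub_smul_dbarAlong_smul_slice hG hsupp] at h
  exact (integrable_smul_iff (neg_ne_zero.mpr (ofReal_ne_zero.mpr pi_ne_zero)) _).mp h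

lemma integral_inv_sub_smul_dbarAlong_smul [CompleteSpace E] (hG : ContDiff ℝ 1 G)
    (hsupp : HasCompactSupport G)
    (hint : Integrable fun z : ℂ × ℂ ↦ (z.2 - z.1)⁻¹ • dbarAlong (0, 1) G z • ρ z.1) :
    ∫ z : ℂ × ℂ, (z.2 - z.1)⁻¹ • dbarAlong (0, 1) G z • ρ z.1 =
      -(π : ℂ) • ∫ z, G (z, z) • ρ z := by
  rw [Measure.volume_eq_prod] at hint ⊢
  rw [integral_prod _ hint, ← integral_smul]
  simp only [integral_inv_sub_smul_dbarAlong_smul_slice hG hsupp]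

end CauchyKernel

section TemperateGrowth

/-- Locally temperate growth near the real line of a function on `ℂ ∖ ℝ`; its values at real points
are irrelevant. `TemperateResolventLoc P` is the case of the resolvent of `P`. -/
def IsTemperateNearReal {E : Type*} [NormedAddCommGroup E] (ρ : ℂ → E) : Prop :=
  ∀ R > (0 : ℝ), ∃ C N : ℝ, 0 ≤ C ∧ 0 ≤ N ∧ ∀ z : ℂ, z.im ≠ 0 → ‖z‖ ≤ R →
    ‖ρ z‖ ≤ C * |z.im| ^ (-N)

lemma IsTemperateNearReal.exists_pow_mul_norm_le {E : Type*} [NormedAddCommGroup E] {ρ : ℂ → E}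
    (hρ : IsTemperateNearReal ρ) (R : ℝ) :
    ∃ (n : ℕ) (K : ℝ), ∀ z : ℂ, z.im ≠ 0 → ‖z‖ ≤ R → |z.im| ^ n * ‖ρ z‖ ≤ K := by
  obtain ⟨C, N, hC, -, h⟩ := hρ (|R| + 1) (by positivity)
  refine ⟨⌈N⌉₊, (|R| + 1) ^ ((⌈N⌉₊ : ℝ) - N) * C, fun z hz hzR ↦ ?_⟩
  have hzR' : ‖z‖ ≤ |R| + 1 := by linarith [le_abs_self R]
  have hpos : 0 < |z.im| := abs_pos.mpr hz
  calc |z.im| ^ ⌈N⌉₊ * ‖ρ z‖ ≤ |z.im| ^ ⌈N⌉₊ * (C * |z.im| ^ (-N)) := by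
        gcongr
        exact h z hz hzR'
    _ = |z.im| ^ ((⌈N⌉₊ : ℝ) - N) * C := by
        rw [sub_eq_add_neg, Real.rpow_add hpos, Real.rpow_natCast]
        ring
    _ ≤ (|R| + 1) ^ ((⌈N⌉₊ : ℝ) - N) * C := by
        gcongr
        · exact sub_nonneg.mpr (Nat.le_ceil N)
        · exact (abs_im_le_norm z).trans hzR'

end TemperateGrowth

section AlmostHolomorphic

lemma dbar_diag {F : ℂ × ℂ → ℂ} (hF : Differentiable ℝ F) (z : ℂ) :
    dbar (fun w ↦ F (w, w)) z = dbar1 F (z, z) + dbar2 F (z, z) := by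
  rw [dbar1_eq_dbarAlong, dbar2_eq_dbarAlong, ← dbarAlong_add, dbar_eq_dbarAlong]
  simpa [Function.comp_def] using dbarAlong_comp (f := fun w : ℂ ↦ (w, w)) (hF (z, z))
    ((hasFDerivAt_id z).prodMk (hasFDerivAt_id z)) 1

lemma dbar1_comp_swap {F : ℂ × ℂ → ℂ} (hF : Differentiable ℝ F) :
    dbar1 (F ∘ Prod.swap) = dbar2 F ∘ Prod.swap := by
  rw [dbar1_eq_dbarAlong, dbar2_eq_dbarAlong, dbarAlong_comp_swap hF, Prod.swap_prod_mk]

lemma dbar2_comp_swap {F : ℂ × ℂ → ℂ} (hF : Differentiable ℝ F) :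
    dbar2 (F ∘ Prod.swap) = dbar1 F ∘ Prod.swap := by
  rw [dbar1_eq_dbarAlong, dbar2_eq_dbarAlong, dbarAlong_comp_swap hF, Prod.swap_prod_mk]

lemma dbarAlong_dbar1 {F : ℂ × ℂ → ℂ} (hF : ContDiff ℝ 2 F) :
    dbarAlong (0, 1) (dbar1 F) = dbar12 F := by
  rw [dbar12_eq_dbarAlong, dbar1_eq_dbarAlong, dbarAlong_comm hF]

lemma dbar12_comp_swap {F : ℂ × ℂ → ℂ} (hF : ContDiff ℝ 2 F) :
    dbar12 (F ∘ Prod.swap) = dbar12 F ∘ Prod.swap := by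
  have hF₁ : Differentiable ℝ (dbarAlong (1, 0) F) :=
    (contDiff_dbarAlong (m := 1) hF le_rfl _).differentiable one_ne_zero
  rw [dbar12_eq_dbarAlong, dbar12_eq_dbarAlong,
    dbarAlong_comp_swap (hF.differentiable two_ne_zero), Prod.swap_prod_mk,
    dbarAlong_comp_swap hF₁, Prod.swap_prod_mk, dbarAlong_comm hF]

namespace IsSpecialAHExt2

variable {f : ℝ × ℝ → ℂ} {F : ℂ × ℂ → ℂ}

lemma contDiff (hF : IsSpecialAHExt2 f F) {n : ℕ∞} : ContDiff ℝ n F :=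
  hF.1.of_le (mod_cast le_top)

lemma contDiff_dbar1 (hF : IsSpecialAHExt2 f F) : ContDiff ℝ 1 (dbar1 F) := by
  rw [dbar1_eq_dbarAlong]
  exact contDiff_dbarAlong (hF.contDiff (n := 2)) le_rfl _

lemma hasCompactSupport_dbar1 (hF : IsSpecialAHExt2 f F) : HasCompactSupport (dbar1 F) := by
  rw [dbar1_eq_dbarAlong]
  exact hasCompactSupport_dbarAlong hF.2.1 _

lemma continuous_dbar12 (hF : IsSpecialAHExt2 f F) : Continuous (dbar12 F) := by
  rw [← dbarAlong_dbar1 (hF.contDiff (n := 2))]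
  exact (contDiff_dbarAlong (m := 0) hF.contDiff_dbar1 (by simp) _).continuous

lemma hasCompactSupport_dbar12 (hF : IsSpecialAHExt2 f F) : HasCompactSupport (dbar12 F) := by
  rw [← dbarAlong_dbar1 (hF.contDiff (n := 2))]
  exact hasCompactSupport_dbarAlong hF.hasCompactSupport_dbar1 _

lemma dbar12_eq_zero (hF : IsSpecialAHExt2 f F) {z : ℂ × ℂ} (hz : z.1.im = 0 ∨ z.2.im = 0) :
    dbar12 F z = 0 := by
  obtain ⟨C, hC⟩ := hF.2.2.2 1
  have h := (hC z).2.2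
  rcases hz with hz | hz <;> simpa [hz] using h

protected lemma swap (hF : IsSpecialAHExt2 f F) :
    IsSpecialAHExt2 (f ∘ Prod.swap) (F ∘ Prod.swap) := by
  have hdiff : Differentiable ℝ F := (hF.contDiff (n := 1)).differentiable one_ne_zero
  refine ⟨hF.1.comp (contDiff_snd.prodMk contDiff_fst),
    hF.2.1.comp_homeomorph (Homeomorph.prodComm ℂ ℂ), fun x y ↦ hF.2.2.1 y x, fun N ↦ ?_⟩
  obtain ⟨C, hC⟩ := hF.2.2.2 N
  refine ⟨C, fun z ↦ ?_⟩
  rw [dbar1_comp_swap hdiff, dbar2_comp_swap hdiff, dbar12_comp_swap (hF.contDiff (n := 2)),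
    mul_comm |z.1.im|]
  exact ⟨(hC z.swap).2.1, (hC z.swap).1, (hC z.swap).2.2⟩

lemma isAHExt_diag (hF : IsSpecialAHExt2 f F) :
    IsAHExt (fun x ↦ f (x, x)) (fun z ↦ F (z, z)) := by
  have hdiag : Topology.IsClosedEmbedding fun z : ℂ ↦ (z, z) :=
    Function.LeftInverse.isClosedEmbedding (f := Prod.fst) (fun _ ↦ rfl) continuous_fst
      (by fun_prop)
  refine ⟨hF.1.comp (contDiff_id.prodMk contDiff_id), hF.2.1.comp_isClosedEmbedding hdiag,
    fun x ↦ hF.2.2.1 x x, fun N ↦ ?_⟩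
  obtain ⟨C, hC⟩ := hF.2.2.2 N
  refine ⟨C + C, fun z ↦ ?_⟩
  rw [dbar_diag (hF.1.differentiable (by simp)), add_mul]
  exact norm_add_le_of_le (hC (z, z)).1 (hC (z, z)).2.1

variable {E : Type*} [NormedAddCommGroup E] [NormedSpace ℂ E] {ρ : ℂ → E}

lemma exists_norm_dbar12_smul_le (hF : IsSpecialAHExt2 f F) (hρ : IsTemperateNearReal ρ) :
    ∃ M, ∀ z, ‖dbar12 F z • ρ z.1‖ ≤ M := by
  obtain ⟨R, hR⟩ := hF.hasCompactSupport_dbar12.isCompact.isBounded.subset_closedBall 0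
  obtain ⟨n, K, hK⟩ := hρ.exists_pow_mul_norm_le R
  obtain ⟨C, hC⟩ := hF.2.2.2 n
  refine ⟨|C| * |R| ^ n * |K|, fun z ↦ ?_⟩
  by_cases hz : dbar12 F z = 0
  · rw [hz, zero_smul, norm_zero]
    positivity
  have him : z.1.im ≠ 0 := fun h ↦ hz (hF.dbar12_eq_zero (.inl h))
  have hzR : ‖z‖ ≤ R := mem_closedBall_zero_iff.mp (hR (subset_tsupport _ hz))
  have him₂ : |z.2.im| ≤ |R| :=
    (abs_im_le_norm _).trans <| (norm_snd_le z).trans <| hzR.trans (le_abs_self R)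
  calc ‖dbar12 F z • ρ z.1‖ ≤ |C| * (|z.1.im| * |z.2.im|) ^ n * ‖ρ z.1‖ := by
        rw [norm_smul]
        gcongr
        exact (hC z).2.2.trans (by gcongr; exact le_abs_self C)
    _ = |C| * |z.2.im| ^ n * (|z.1.im| ^ n * ‖ρ z.1‖) := by ring
    _ ≤ |C| * |R| ^ n * |K| := by
        gcongr
        exact (hK _ him ((norm_fst_le z).trans hzR)).trans (le_abs_self K)

lemma integrable_inv_sub_smul_dbar12_smul (hF : IsSpecialAHExt2 f F)
    (hρ : IsTemperateNearReal ρ) (hmeas : AEStronglyMeasurable ρ volume) :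
    Integrable fun z : ℂ × ℂ ↦ (z.2 - z.1)⁻¹ • dbar12 F z • ρ z.1 := by
  obtain ⟨M, hM⟩ := hF.exists_norm_dbar12_smul_le hρ
  exact integrable_inv_sub_smul (hF.continuous_dbar12.aestronglyMeasurable.smul hmeas.comp_fst)
    hF.hasCompactSupport_dbar12.smul_right hM

variable [CompleteSpace E]

lemma integrable_dbar1_diag_smul (hF : IsSpecialAHExt2 f F) (hρ : IsTemperateNearReal ρ)
    (hmeas : AEStronglyMeasurable ρ volume) : Integrable fun z ↦ dbar1 F (z, z) • ρ z := by
  refine integrable_diag_smul_of_integrable_dbarAlong hF.contDiff_dbar1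
    hF.hasCompactSupport_dbar1 ?_
  rw [dbarAlong_dbar1 (hF.contDiff (n := 2))]
  exact hF.integrable_inv_sub_smul_dbar12_smul hρ hmeas

lemma integral_inv_sub_smul_dbar12_smul (hF : IsSpecialAHExt2 f F) (hρ : IsTemperateNearReal ρ)
    (hmeas : AEStronglyMeasurable ρ volume) :
    ∫ z : ℂ × ℂ, (z.2 - z.1)⁻¹ • dbar12 F z • ρ z.1 =
      -(π : ℂ) • ∫ z, dbar1 F (z, z) • ρ z := by
  have hdbar := dbarAlong_dbar1 (hF.contDiff (n := 2))
  rw [← hdbar]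
  refine integral_inv_sub_smul_dbarAlong_smul hF.contDiff_dbar1 hF.hasCompactSupport_dbar1 ?_
  rw [hdbar]
  exact hF.integrable_inv_sub_smul_dbar12_smul hρ hmeas

theorem integral_inv_sub_smul_dbar12_smul_sub (hF : IsSpecialAHExt2 f F)
    (hρ : IsTemperateNearReal ρ) (hmeas : AEStronglyMeasurable ρ volume) :
    ∫ z : ℂ × ℂ, (z.2 - z.1)⁻¹ • dbar12 F z • (ρ z.1 - ρ z.2) =
      -(π : ℂ) • ∫ z, dbar (fun w ↦ F (w, w)) z • ρ z := by
  have hdiff : Differentiable ℝ F := (hF.contDiff (n := 1)).differentiable one_ne_zero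
  have hfst := hF.integrable_inv_sub_smul_dbar12_smul hρ hmeas
  have hsnd : Integrable fun z : ℂ × ℂ ↦
      (z.1 - z.2)⁻¹ • dbar12 (F ∘ Prod.swap) z.swap • ρ z.2 :=
    (hF.swap.integrable_inv_sub_smul_dbar12_smul hρ hmeas).swap
  have hsplit (z : ℂ × ℂ) : (z.2 - z.1)⁻¹ • dbar12 F z • (ρ z.1 - ρ z.2) =
      (z.2 - z.1)⁻¹ • dbar12 F z • ρ z.1 +
        (z.1 - z.2)⁻¹ • dbar12 (F ∘ Prod.swap) z.swap • ρ z.2 := by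
    rw [dbar12_comp_swap (hF.contDiff (n := 2)), Function.comp_apply, Prod.swap_swap,
      ← neg_sub z.2 z.1, inv_neg]
    module
  have hswap : ∫ z : ℂ × ℂ, (z.1 - z.2)⁻¹ • dbar12 (F ∘ Prod.swap) z.swap • ρ z.2 =
      ∫ z : ℂ × ℂ, (z.2 - z.1)⁻¹ • dbar12 (F ∘ Prod.swap) z • ρ z.1 :=
    integral_prod_swap (μ := (volume : Measure ℂ)) (ν := (volume : Measure ℂ))
      fun z : ℂ × ℂ ↦ (z.2 - z.1)⁻¹ • dbar12 (F ∘ Prod.swap) z • ρ z.1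
  have hdbar (z : ℂ) : dbar (fun w ↦ F (w, w)) z • ρ z =
      dbar1 F (z, z) • ρ z + dbar1 (F ∘ Prod.swap) (z, z) • ρ z := by
    rw [dbar_diag hdiff, dbar1_comp_swap hdiff, add_smul, Function.comp_apply, Prod.swap_prod_mk]
  simp only [hsplit, hdbar]
  rw [integral_add hfst hsnd, hswap, hF.integral_inv_sub_smul_dbar12_smul hρ hmeas,
    hF.swap.integral_inv_sub_smul_dbar12_smul hρ hmeas, ← smul_add,
    ← integral_add (hF.integrable_dbar1_diag_smul hρ hmeas)
      (hF.swap.integrable_dbar1_diag_smul hρ hmeas)]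

end IsSpecialAHExt2

end AlmostHolomorphic

section Pseudoresolvent

/-- A pseudoresolvent on `ℂ ∖ ℝ`: a function subject to the resolvent identity; its values at real
points are irrelevant. It need not be the resolvent of an element of `A`, so that for instance
resolvents of closed unbounded operators with real spectrum are included. -/
def IsPseudoresolventOffReal {A : Type*} [Ring A] [Module ℂ A] (ρ : ℂ → A) : Prop :=
  ∀ z w : ℂ, z.im ≠ 0 → w.im ≠ 0 → ρ z - ρ w = (w - z) • (ρ z * ρ w)

lemma isPseudoresolventOffReal_res {B : Type*} [NormedAddCommGroup B] [NormedSpace ℂ B]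
    {P : B →L[ℂ] B} (hP : RealSpectrum P) : IsPseudoresolventOffReal (res P) := by
  have hunit {z : ℂ} (hz : z.im ≠ 0) : IsUnit (z • (1 : B →L[ℂ] B) - P) := by
    rw [← Algebra.algebraMap_eq_smul_one]
    exact spectrum.notMem_iff.mp fun hmem ↦ hz (hP z hmem)
  intro z w hz hw
  rw [res, res, Ring.inverse_sub_inverse (iff_of_true (hunit hz) (hunit hw)),
    sub_sub_sub_cancel_right, ← sub_smul, mul_smul_comm, mul_one, smul_mul_assoc]

lemma isOpen_setOf_im_ne_zero : IsOpen {z : ℂ | z.im ≠ 0} :=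
  isOpen_ne_fun continuous_im continuous_const

lemma ae_im_ne_zero : ∀ᵐ z : ℂ, z.im ≠ 0 := by
  have hker : LinearMap.ker imLm ≠ ⊤ := fun h ↦ by
    have hI : I ∈ LinearMap.ker imLm := h ▸ Submodule.mem_top
    simp at hI
  exact measure_eq_zero_iff_ae_notMem.mp (Measure.addHaar_submodule volume _ hker)

lemma ae_prod_fst_ne_snd {X : Type*} [MeasurableSpace X] [MeasurableEq X] (μ ν : Measure X)
    [SFinite ν] [NullSingletonClass ν] : ∀ᵐ z ∂μ.prod ν, z.1 ≠ z.2 :=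
  (Measure.ae_prod_iff_ae_ae (measurableSet_eq_fun measurable_fst measurable_snd).compl).mpr <|
    .of_forall fun a ↦ (Measure.ae_ne ν a).mono fun _ hb ↦ hb.symm

variable {A : Type*} [NormedRing A] [NormedAlgebra ℂ A] {ρ : ℂ → A}

namespace IsPseudoresolventOffReal

lemma continuousOn [CompleteSpace A] (hρ : IsPseudoresolventOffReal ρ) :
    ContinuousOn ρ {z | z.im ≠ 0} := by
  intro z hz
  have hfactor : ∀ w : ℂ, w.im ≠ 0 → ρ z = ρ w * (1 + (w - z) • ρ z) := fun w hw ↦ by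
    rw [mul_add, mul_one, mul_smul_comm, ← neg_sub z w, neg_smul, ← hρ w z hw hz]
    abel
  have hcont : ContinuousAt (fun w : ℂ ↦ 1 + (w - z) • ρ z) z := by fun_prop
  have hone : 1 + (z - z) • ρ z = ((1 : Aˣ) : A) := by simp
  have hunit : ∀ᶠ w in 𝓝 z, IsUnit (1 + (w - z) • ρ z) :=
    hcont.eventually_mem (by rw [hone]; exact Units.nhds 1)
  have hinv : ContinuousAt (fun w : ℂ ↦ ρ z * Ring.inverse (1 + (w - z) • ρ z)) z :=
    continuousAt_const.mul ((NormedRing.inverse_continuousAt 1).comp_of_eq hcont hone)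
  refine (hinv.congr ?_).continuousWithinAt
  filter_upwards [hunit, isOpen_setOf_im_ne_zero.mem_nhds hz] with w hw him
  calc ρ z * Ring.inverse (1 + (w - z) • ρ z)
      = ρ w * (1 + (w - z) • ρ z) * Ring.inverse (1 + (w - z) • ρ z) := by rw [← hfactor w him]
    _ = ρ w := Ring.mul_inverse_cancel_right _ _ hw

lemma aestronglyMeasurable [CompleteSpace A] (hρ : IsPseudoresolventOffReal ρ) :
    AEStronglyMeasurable ρ volume := by
  rw [← Measure.restrict_eq_self_of_ae_mem (s := {z : ℂ | z.im ≠ 0}) ae_im_ne_zero]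
  exact hρ.continuousOn.aestronglyMeasurable isOpen_setOf_im_ne_zero.measurableSet

lemma mul_eq_inv_sub_smul_sub (hρ : IsPseudoresolventOffReal ρ) {z w : ℂ} (hz : z.im ≠ 0)
    (hw : w.im ≠ 0) (hzw : z ≠ w) : ρ z * ρ w = (w - z)⁻¹ • (ρ z - ρ w) := by
  rw [hρ z w hz hw, inv_smul_smul₀ (sub_ne_zero.mpr hzw.symm)]

end IsPseudoresolventOffReal

lemma IsSpecialAHExt2.integral_dbar12_smul_mul [CompleteSpace A] {f : ℝ × ℝ → ℂ} {F : ℂ × ℂ → ℂ}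
    (hF : IsSpecialAHExt2 f F) (hρ : IsPseudoresolventOffReal ρ) (htemp : IsTemperateNearReal ρ) :
    ∫ z : ℂ × ℂ, dbar12 F z • (ρ z.1 * ρ z.2) =
      -(π : ℂ) • ∫ z, dbar (fun w ↦ F (w, w)) z • ρ z := by
  rw [← hF.integral_inv_sub_smul_dbar12_smul_sub htemp hρ.aestronglyMeasurable]
  refine integral_congr_ae ((ae_prod_fst_ne_snd volume volume).mono fun z hz ↦ ?_)
  by_cases him : z.1.im = 0 ∨ z.2.im = 0
  · simp only [hF.dbar12_eq_zero him, zero_smul, smul_zero]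
  · obtain ⟨him₁, him₂⟩ := not_or.mp him
    simp only [hρ.mul_eq_inv_sub_smul_sub him₁ him₂ hz, smul_comm (dbar12 F z)]

end Pseudoresolvent

theorem diagonal_restriction_general {A : Type*} [NormedRing A] [NormedAlgebra ℂ A]
    [CompleteSpace A] {ρ : ℂ → A} (hρ : IsPseudoresolventOffReal ρ)
    (htemp : IsTemperateNearReal ρ) {f : ℝ × ℝ → ℂ} {F : ℂ × ℂ → ℂ}
    (hF : IsSpecialAHExt2 f F) :
    IsAHExt (fun x ↦ f (x, x)) (fun z ↦ F (z, z)) ∧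
    (1 / (π : ℂ) ^ 2) • ∫ z : ℂ × ℂ, dbar12 F z • (ρ z.1 * ρ z.2) =
      (-(1 / (π : ℂ))) • ∫ z : ℂ, dbar (fun w ↦ F (w, w)) z • ρ z := by
  refine ⟨hF.isAHExt_diag, ?_⟩
  have hπ : (π : ℂ) ≠ 0 := ofReal_ne_zero.mpr pi_ne_zero
  rw [hF.integral_dbar12_smul_mul hρ htemp, smul_smul]
  congr 1
  field_simp

/-- Proposition 4.2 (case `m = 2`): `f(P, P) = f^{(1)}(P)` where `f^{(1)}(x) = f(x,x)`.
The diagonal `z ↦ F(z,z)` is an almost holomorphic extension of `x ↦ f(x,x)` and the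
two-fold iterated Cauchy integral collapses to the one-dimensional one. -/
theorem diagonal_restriction {B : Type*} [NormedAddCommGroup B] [NormedSpace ℂ B]
    [CompleteSpace B] (P : B →L[ℂ] B)
    (hspec : RealSpectrum P) (hres : TemperateResolventLoc P)
    (f : ℝ × ℝ → ℂ) (hf_smooth : ContDiff ℝ (⊤ : ℕ∞) f) (hf_supp : HasCompactSupport f)
    (F : ℂ × ℂ → ℂ) (hF : IsSpecialAHExt2 f F) :
    IsAHExt (fun x : ℝ => f (x, x)) (fun z : ℂ => F (z, z)) ∧
    ((1/(π:ℂ)^2)) • ∫ z : ℂ × ℂ, dbar12 F z • (res P z.1 * res P z.2) =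
      (-(1/(π:ℂ))) • ∫ z : ℂ, dbar (fun w : ℂ => F (w, w)) z • res P z := by
  exact diagonal_restriction_general (isPseudoresolventOffReal_res hspec) hres hF
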